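/- arXiv:hep-th/9812140 — 2 statements merged into one kernel-verified Lean document; each statement's English description precedes it below -/
import Mathlib

section
/- D ∘ D = 0, and ker D / im D is a two-dimensional k-vector space spanned by the classes of (1, 0) and (0, x^r); i.e. the cohomology E₂ in the (A, F)-sector of Chapline–Manton model 2 is generated by 1 and the ghost-number-one cocycle μ = a·F^r. -/
/- Context: `k` a field, `r ≥ 1`, `R = k[x]/(x^{r+1})`, `M = R × R`, where `(p, q)`
encodes `p + q·a` with `a` the odd last ghost of the 1-form and `x` the curvature `F`
subject to `F^{r+1} = 0`; `D(p, q) = (x·q, 0)` encodes the differential `d₁` of the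
descent-equation analysis of Chapline–Manton model 2 (`d₁a = F`, `d₁F = 0`). -/

open LinearMap Polynomial

noncomputable section

variable (k : Type*) [Field k] (r : ℕ)

/-- The truncated polynomial ring `k[x]/(x^{r+1})`. -/
abbrev Rcm2 : Type _ := Polynomial k ⧸ Ideal.span {(X : Polynomial k) ^ (r + 1)}

/-- The image of `x` in `k[x]/(x^{r+1})`. -/
def ξ : Rcm2 k r := Ideal.Quotient.mk _ (X : Polynomial k)

/-- The `k`-linear differential `D(p, q) = (x·q, 0)` on `M = R × R`. -/
def Dcm2E1 : (Rcm2 k r × Rcm2 k r) →ₗ[k] (Rcm2 k r × Rcm2 k r) where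
  toFun pq := (ξ k r * pq.2, 0)
  map_add' x y := by
    simp only [Prod.snd_add, mul_add, Prod.mk_add_mk, add_zero]
  map_smul' c x := by
    simp only [Prod.smul_snd, RingHom.id_apply, Prod.smul_mk, smul_zero,
      Algebra.mul_smul_comm c (ξ k r) x.2]

/-!
A map `D(w, v) = (f v, 0)` on `W × V` has cohomology `coker f × ker f`. Here `f` is multiplication
by `x` on `k[x]/(x ^ (r + 1))`: its cokernel is `k`, spanned by the class of `1`, and its kernel is
the line spanned by `x ^ r`. The same holds over any commutative ring for `x` acting on
`k[x]/(x * g)` with `g` a regular polynomial in the place of `x ^ r`, because every polynomial is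
its constant term plus a multiple of `x`.
-/

/-- The quotient map from the cocycles of an endomorphism `D` to its cohomology. The target is
`ker D / (im D ∩ ker D)`, which is `ker D / im D` as soon as `D ∘ D = 0`. -/
abbrev cohomologyClass {S M : Type*} [Ring S] [AddCommGroup M] [Module S M] (D : M →ₗ[S] M) :
    ker D →ₗ[S] ker D ⧸ (range D).comap (ker D).subtype :=
  ((range D).comap (ker D).subtype).mkQ

section TwoTermDifferential

variable {S V W : Type*} [Ring S] [AddCommGroup V] [Module S V] [AddCommGroup W] [Module S W]
  (f : V →ₗ[S] W)

/-- The two-term complex `f : V → W`, folded into a single differential `(w, v) ↦ (f v, 0)` on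
`W × V`. -/
def twoTermDifferential : W × V →ₗ[S] W × V :=
  inl S W V ∘ₗ f ∘ₗ snd S W V

theorem twoTermDifferential_apply (p : W × V) : twoTermDifferential f p = (f p.2, 0) :=
  rfl

theorem twoTermDifferential_comp_self : twoTermDifferential f ∘ₗ twoTermDifferential f = 0 := by
  ext <;> simp [twoTermDifferential_apply]

variable {f}

theorem mem_ker_twoTermDifferential {p : W × V} :
    p ∈ ker (twoTermDifferential f) ↔ p.2 ∈ ker f := by
  simp [twoTermDifferential_apply]

theorem mem_range_twoTermDifferential {p : W × V} :
    p ∈ range (twoTermDifferential f) ↔ p.1 ∈ range f ∧ p.2 = 0 := by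
  simp [twoTermDifferential_apply, Prod.ext_iff, eq_comm]

variable {w : W} {v : V} (hw : (w, 0) ∈ ker (twoTermDifferential f))
  (hv : (0, v) ∈ ker (twoTermDifferential f))

theorem span_cohomologyClass_twoTermDifferential_eq_top
    (coker_span : Submodule.span S {w} ⊔ range f = ⊤) (ker_span : ker f ≤ Submodule.span S {v}) :
    Submodule.span S {cohomologyClass (twoTermDifferential f) ⟨(w, 0), hw⟩,
      cohomologyClass (twoTermDifferential f) ⟨(0, v), hv⟩} = ⊤ := by
  rw [eq_top_iff]
  rintro y -
  obtain ⟨⟨⟨a, b⟩, hab⟩, rfl⟩ := Submodule.mkQ_surjective _ y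
  obtain ⟨d, rfl⟩ := Submodule.mem_span_singleton.mp
    (ker_span (mem_ker_twoTermDifferential.mp hab))
  obtain ⟨_, hc, _, ⟨s, rfl⟩, rfl⟩ := Submodule.mem_sup.mp (coker_span ▸ Submodule.mem_top (x := a))
  obtain ⟨c, rfl⟩ := Submodule.mem_span_singleton.mp hc
  refine Submodule.mem_span_pair.mpr ⟨c, d, ?_⟩
  rw [← map_smul, ← map_smul, ← map_add, ← sub_eq_zero, ← map_sub, Submodule.mkQ_apply,
    Submodule.Quotient.mk_eq_zero, Submodule.mem_comap, mem_range_twoTermDifferential]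
  simp

theorem linearIndependent_cohomologyClass_twoTermDifferential
    (coker_free : ∀ c : S, c • w ∈ range f → c = 0) (ker_free : ∀ c : S, c • v = 0 → c = 0) :
    LinearIndependent S ![cohomologyClass (twoTermDifferential f) ⟨(w, 0), hw⟩,
      cohomologyClass (twoTermDifferential f) ⟨(0, v), hv⟩] := by
  refine LinearIndependent.pair_iff.mpr fun c d h => ?_
  rw [← map_smul, ← map_smul, ← map_add, Submodule.mkQ_apply,
    Submodule.Quotient.mk_eq_zero, Submodule.mem_comap, mem_range_twoTermDifferential] at h
  obtain ⟨hc, hd⟩ : c • w ∈ range f ∧ d • v = 0 := by simpa using h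
  exact ⟨coker_free c hc, ker_free d hd⟩

end TwoTermDifferential

section MulRoot

open AdjoinRoot (mk root)

variable {S : Type*} [CommRing S] {f g : S[X]}

theorem adjoinRoot_mk_eq_coeff_zero_smul_add (p : S[X]) :
    mk f p = p.coeff 0 • 1 + root f * mk f p.divX := by
  conv_lhs => rw [← X_mul_divX_add p]
  rw [map_add, map_mul, AdjoinRoot.mk_X, add_comm, Algebra.smul_def, mul_one,
    AdjoinRoot.algebraMap_eq, AdjoinRoot.mk_C]

theorem span_one_sup_range_mulLeft_root (f : S[X]) :
    Submodule.span S {1} ⊔ range (mulLeft S (root f)) = ⊤ := by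
  rw [eq_top_iff]
  rintro a -
  obtain ⟨p, rfl⟩ := AdjoinRoot.mk_surjective a
  rw [adjoinRoot_mk_eq_coeff_zero_smul_add]
  exact Submodule.add_mem_sup
    (Submodule.smul_mem _ _ (Submodule.mem_span_singleton_self 1)) (mem_range_self _ _)

theorem eq_zero_of_smul_one_mem_range_mulLeft_root (hf : X ∣ f) {c : S}
    (hc : c • 1 ∈ range (mulLeft S (root f))) : c = 0 := by
  obtain ⟨a, ha⟩ := hc
  obtain ⟨p, rfl⟩ := AdjoinRoot.mk_surjective a
  rw [mulLeft_apply, ← AdjoinRoot.mk_X, ← map_mul, ← map_one (mk f), AdjoinRoot.smul_mk,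
    AdjoinRoot.mk_eq_mk] at ha
  simpa using X_dvd_iff.mp (hf.trans ha)

theorem ker_mulLeft_root_eq_span (hfg : f = X * g) :
    ker (mulLeft S (root f)) = Submodule.span S {mk f g} := by
  have root_mul_mk : root f * mk f g = 0 := by
    rw [← AdjoinRoot.mk_X, ← map_mul, ← hfg, AdjoinRoot.mk_self]
  refine le_antisymm (fun a ha => ?_) ?_
  · obtain ⟨p, rfl⟩ := AdjoinRoot.mk_surjective a
    rw [mem_ker, mulLeft_apply, ← AdjoinRoot.mk_X, ← map_mul, AdjoinRoot.mk_eq_zero, hfg,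
      isRegular_X.left.dvd_cancel_left] at ha
    obtain ⟨q, rfl⟩ := ha
    refine Submodule.mem_span_singleton.mpr ⟨q.coeff 0, ?_⟩
    rw [map_mul, adjoinRoot_mk_eq_coeff_zero_smul_add q, mul_add, mul_left_comm, ← mul_assoc,
      root_mul_mk, zero_mul, add_zero, mul_smul_comm, mul_one]
  · rwa [Submodule.span_singleton_le_iff_mem, mem_ker, mulLeft_apply]

theorem eq_zero_of_smul_mk_eq_zero (hg : IsRegular g) (hfg : f = X * g) {c : S}
    (hc : c • mk f g = 0) : c = 0 := by
  rw [AdjoinRoot.smul_mk, AdjoinRoot.mk_eq_zero, hfg, smul_eq_C_mul, mul_comm X, mul_comm (C c),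
    hg.left.dvd_cancel_left, X_dvd_iff, coeff_C_zero] at hc
  exact hc

theorem statement11_general (hg : IsRegular g) (hfg : f = X * g) :
    let D := twoTermDifferential (mulLeft S (root f))
    D ∘ₗ D = 0 ∧
    ∃ (h1 : (1, 0) ∈ ker D) (h2 : (0, mk f g) ∈ ker D),
      Submodule.span S {cohomologyClass D ⟨(1, 0), h1⟩, cohomologyClass D ⟨(0, mk f g), h2⟩} = ⊤ ∧
      LinearIndependent S
        ![cohomologyClass D ⟨(1, 0), h1⟩, cohomologyClass D ⟨(0, mk f g), h2⟩] := by
  have ker_eq := ker_mulLeft_root_eq_span hfg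
  have h1 : (1, 0) ∈ ker (twoTermDifferential (mulLeft S (root f))) :=
    mem_ker_twoTermDifferential.mpr (zero_mem _)
  have h2 : (0, mk f g) ∈ ker (twoTermDifferential (mulLeft S (root f))) :=
    mem_ker_twoTermDifferential.mpr (ker_eq ▸ Submodule.mem_span_singleton_self _)
  exact ⟨twoTermDifferential_comp_self _, h1, h2,
    span_cohomologyClass_twoTermDifferential_eq_top h1 h2
      (span_one_sup_range_mulLeft_root f) ker_eq.le,
    linearIndependent_cohomologyClass_twoTermDifferential h1 h2
      (fun _ => eq_zero_of_smul_one_mem_range_mulLeft_root (hfg ▸ dvd_mul_right X g))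
      (fun _ => eq_zero_of_smul_mk_eq_zero hg hfg)⟩

end MulRoot

/-- `D ∘ D = 0`, and `ker D / im D` is a two-dimensional `k`-vector space
spanned by the classes of `(1, 0)` and `(0, x^r)`: the cohomology `E₂` in the
`(A, F)`-sector of Chapline–Manton model 2 is generated by `1` and the ghost-number-one
cocycle `μ = a·F^r`. -/
theorem statement11 (hr : 1 ≤ r) :
    Dcm2E1 k r ∘ₗ Dcm2E1 k r = 0 ∧
    ∃ (h1 : ((1, 0) : Rcm2 k r × Rcm2 k r) ∈ ker (Dcm2E1 k r))
      (h2 : ((0, ξ k r ^ r) : Rcm2 k r × Rcm2 k r) ∈ ker (Dcm2E1 k r)),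
      Submodule.span k
        {((range (Dcm2E1 k r)).comap (ker (Dcm2E1 k r)).subtype).mkQ ⟨(1, 0), h1⟩,
         ((range (Dcm2E1 k r)).comap (ker (Dcm2E1 k r)).subtype).mkQ ⟨(0, ξ k r ^ r), h2⟩}
        = ⊤ ∧
      LinearIndependent k
        ![((range (Dcm2E1 k r)).comap (ker (Dcm2E1 k r)).subtype).mkQ ⟨(1, 0), h1⟩,
          ((range (Dcm2E1 k r)).comap (ker (Dcm2E1 k r)).subtype).mkQ ⟨(0, ξ k r ^ r), h2⟩] := by
  -- `Rcm2`, `ξ` and `Dcm2E1` unfold to `AdjoinRoot`, its root and the two-term differential.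
  exact statement11_general (isRegular_X_pow r) (pow_succ' X r)

end
end

section
/- For all integers l ≥ 1, k ≥ 0 and m ∈ {0, 1}, set a = A₀₁·B₀₂^l·F^k·H^m, b = A₁₀·B₀₂^l·F^k·H^m + l·A₀₁·B₁₁·B₀₂^{l−1}·F^k·H^m, and c = l·A₁₀·B₁₁·B₀₂^{l−1}·F^k·H^m + l·A₀₁·B₂₀·B₀₂^{l−1}·F^k·H^m + (l(l−1)/2)·A₀₁·B₁₁²·B₀₂^{l−2}·F^k·H^m (the last term being omitted when l = 1, its coefficient being zero). Then in A: γa = 0, da + γb = 0, and db + γc = F^{k+1}·B₀₂^l·H^m; i.e. a is a γ-cocycle that can be lifted exactly once, the obstruction to a second lift being F^{k+1}B₀₂^lH^m. -/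
/- Context: the 'small algebra' `A = ℚ[B₂₀, B₁₁, B₀₂, F, E] ⊗ Λ(A₁₀, A₀₁, H, K, L)` of a
free 1-form gauge field `A₁₀` (ghost `A₀₁`, curvature `F = dA₁₀`, with `E = dA₀₁`) and a
free 2-form gauge field `B₂₀` (ghosts `B₁₁`, `B₀₂`, curvature `H = dB₂₀`, with
`K = dB₁₁`, `L = dB₀₂`), realized as `MvPolynomial (Fin 5) ℚ ⊗ ExteriorAlgebra ℚ (Fin 5 → ℚ)`
with even generators `B₂₀, B₁₁, B₀₂, F, E` (polynomial variables `0,…,4`) and odd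
generators `A₁₀, A₀₁, H, K, L` (exterior generators `0,…,4`).  The unique odd derivations
`d` (with `dA₁₀ = F`, `dA₀₁ = E`, `dB₂₀ = H`, `dB₁₁ = K`, `dB₀₂ = L`, zero on curvatures)
and `γ` (with `γA₁₀ = −E`, `γB₂₀ = −K`, `γB₁₁ = −L`, zero on the other generators) are
built from partial derivatives, contractions and multiplications. -/

open TensorProduct

noncomputable section

/-- The small algebra `A = ℚ[B₂₀, B₁₁, B₀₂, F, E] ⊗ Λ(A₁₀, A₀₁, H, K, L)`. -/
abbrev SmallAlg : Type :=
  MvPolynomial (Fin 5) ℚ ⊗[ℚ] ExteriorAlgebra ℚ (Fin 5 → ℚ)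

/-- The even generators (as elements of the small algebra). -/
def evGen (i : Fin 5) : SmallAlg := (MvPolynomial.X i) ⊗ₜ[ℚ] 1

/-- The odd generators (as elements of the small algebra). -/
def odGen (i : Fin 5) : SmallAlg := 1 ⊗ₜ[ℚ] (ExteriorAlgebra.ι ℚ (Pi.single i 1))

def B20 : SmallAlg := evGen 0
def B11 : SmallAlg := evGen 1
def B02 : SmallAlg := evGen 2
def Fcur : SmallAlg := evGen 3
def Ecur : SmallAlg := evGen 4
def A10 : SmallAlg := odGen 0
def A01 : SmallAlg := odGen 1
def Hcur : SmallAlg := odGen 2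
def Kcur : SmallAlg := odGen 3
def Lcur : SmallAlg := odGen 4

/-- The coordinate functional dual to the `i`-th exterior generator. -/
def coordφ (i : Fin 5) : Module.Dual ℚ (Fin 5 → ℚ) := LinearMap.proj i

/-- The elementary odd derivation sending the odd generator `i` to the even generator `j`
(and all other generators to zero): `X j · ∂/∂(θ i)`. -/
def odToEv (i j : Fin 5) : SmallAlg →ₗ[ℚ] SmallAlg :=
  TensorProduct.map (LinearMap.mulLeft ℚ (MvPolynomial.X j))
    (CliffordAlgebra.contractLeft (Q := (0 : QuadraticForm ℚ (Fin 5 → ℚ))) (coordφ i))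

/-- The elementary odd derivation sending the even generator `i` to the odd generator `j`
(and all other generators to zero): `θ j · ∂/∂(x i)`. -/
def evToOd (i j : Fin 5) : SmallAlg →ₗ[ℚ] SmallAlg :=
  TensorProduct.map (MvPolynomial.pderiv i).toLinearMap
    (LinearMap.mulLeft ℚ (ExteriorAlgebra.ι ℚ (Pi.single j 1)))

/-- The odd derivation `d`: `dA₁₀ = F`, `dA₀₁ = E`, `dB₂₀ = H`, `dB₁₁ = K`, `dB₀₂ = L`,
`dF = dE = dH = dK = dL = 0`. -/
def dSmall : SmallAlg →ₗ[ℚ] SmallAlg :=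
  odToEv 0 3 + odToEv 1 4 + evToOd 0 2 + evToOd 1 3 + evToOd 2 4

/-- The odd derivation `γ`: `γA₁₀ = −E`, `γA₀₁ = 0`, `γB₂₀ = −K`, `γB₁₁ = −L`,
`γB₀₂ = 0`, `γF = γE = γH = γK = γL = 0`. -/
def γSmall : SmallAlg →ₗ[ℚ] SmallAlg :=
  -(odToEv 0 4 + evToOd 0 3 + evToOd 1 4)

/-! In terms of the total fields `𝒜 = A₁₀ + A₀₁` and `ℬ = B₂₀ + B₁₁ + B₀₂`, the definitions of
`d` and `γ` on the gauge fields and ghosts amount to `(d + γ)𝒜 = F` and `(d + γ)ℬ = H`. Hence, if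
`dz = γz = 0`, then `(d + γ)(𝒜 ℬ ^ l z) = F ℬ ^ l z - l 𝒜 ℬ ^ (l - 1) H z`. Now take
`z = F ^ k H ^ m` and do not count its form degree: `a`, `b`, `c` are the parts of `𝒜 ℬ ^ l z` of
form degree `0`, `1`, `2`. As `γ` preserves the form degree, `d` raises it by one, and `F` and `H`
have form degree `2` and `3`, the parts of that equation of form degree `0`, `1`, `2` read
`γa = 0`, `da + γb = 0` and `db + γc = F B₀₂ ^ l z`. -/

section SkewDerivation

variable {k R : Type*} [CommRing k] [Ring R] [Algebra k R]

/-- `D` is a derivation twisted by the algebra endomorphism `σ`. When `σ` is the parity involution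
of a `ℤ/2`-graded algebra and `D` is odd, this is the Leibniz rule of an odd derivation. -/
def IsSkewDerivation (σ : R →ₐ[k] R) (D : R →ₗ[k] R) : Prop :=
  ∀ x y, D (x * y) = D x * y + σ x * D y

namespace IsSkewDerivation

variable {σ : R →ₐ[k] R} {D D' : R →ₗ[k] R} {x y : R}

theorem add (hD : IsSkewDerivation σ D) (hD' : IsSkewDerivation σ D') :
    IsSkewDerivation σ (D + D') := fun x y => by
  simp only [LinearMap.add_apply, hD x y, hD' x y, add_mul, mul_add]
  abel

theorem neg (hD : IsSkewDerivation σ D) : IsSkewDerivation σ (-D) := fun x y => by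
  simp only [LinearMap.neg_apply, hD x y, neg_mul, mul_neg, neg_add]

theorem map_one (hD : IsSkewDerivation σ D) : D 1 = 0 := by
  simpa using hD 1 1

theorem map_mul_eq_zero (hD : IsSkewDerivation σ D) (hx : D x = 0) (hy : D y = 0) :
    D (x * y) = 0 := by
  rw [hD, hx, hy, zero_mul, mul_zero, add_zero]

theorem map_pow_eq_zero (hD : IsSkewDerivation σ D) (hx : D x = 0) (n : ℕ) : D (x ^ n) = 0 := by
  induction n with
  | zero => rw [pow_zero, hD.map_one]
  | succ n ih => rw [pow_succ, hD.map_mul_eq_zero ih hx]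

theorem map_mul_of_odd (hD : IsSkewDerivation σ D) (hx : σ x = -x) (y : R) :
    D (x * y) = D x * y - x * D y := by
  rw [hD, hx, neg_mul, sub_eq_add_neg]

theorem map_mul_of_even (hD : IsSkewDerivation σ D) (hx : σ x = x) (y : R) :
    D (x * y) = D x * y + x * D y := by
  rw [hD, hx]

theorem map_pow_mul_of_even (hD : IsSkewDerivation σ D) (hx : σ x = x) (hcomm : Commute x (D x))
    (n : ℕ) (y : R) : D (x ^ n * y) = (n : k) • (D x * (x ^ (n - 1) * y)) + x ^ n * D y := by
  induction n generalizing y with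
  | zero => simp
  | succ n ih =>
    have hpow : (n : k) • (D x * (x ^ (n - 1) * (x * y))) = (n : k) • (D x * (x ^ n * y)) := by
      cases n with
      | zero => simp
      | succ n => rw [Nat.add_sub_cancel, pow_succ, mul_assoc]
    calc D (x ^ (n + 1) * y)
        = D (x ^ n * (x * y)) := by rw [pow_succ, mul_assoc]
      _ = (n : k) • (D x * (x ^ n * y)) + x ^ n * (D x * y + x * D y) := by
          rw [ih, hpow, hD.map_mul_of_even hx]
      _ = (n : k) • (D x * (x ^ n * y)) + (D x * (x ^ n * y) + x ^ (n + 1) * D y) := by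
          rw [mul_add, (hcomm.pow_left n).left_comm, ← mul_assoc _ x, ← pow_succ]
      _ = ((n + 1 : ℕ) : k) • (D x * (x ^ (n + 1 - 1) * y)) + x ^ (n + 1) * D y := by
          rw [Nat.add_sub_cancel, Nat.cast_succ, add_smul, one_smul, add_assoc]

end IsSkewDerivation

variable {A B : Type*} [CommRing A] [Algebra k A] [Ring B] [Algebra k B] {σ : B →ₐ[k] B}

theorem IsSkewDerivation.map_mulLeft {D : B →ₗ[k] B} (hD : IsSkewDerivation σ D) (a : A) :
    IsSkewDerivation (Algebra.TensorProduct.map (AlgHom.id k A) σ)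
      (TensorProduct.map (LinearMap.mulLeft k a) D) := fun x y => by
  induction x with
  | zero => simp
  | add x₁ x₂ h₁ h₂ => simp only [add_mul, map_add, h₁, h₂]; abel
  | tmul p v =>
    induction y with
    | zero => simp
    | add y₁ y₂ h₁ h₂ => simp only [mul_add, map_add, h₁, h₂]; abel
    | tmul q w =>
      simp only [Algebra.TensorProduct.tmul_mul_tmul, TensorProduct.map_tmul,
        Algebra.TensorProduct.map_tmul, LinearMap.mulLeft_apply, AlgHom.id_apply, hD v w,
        TensorProduct.tmul_add, mul_assoc, mul_left_comm p a q]

theorem isSkewDerivation_map_derivation_mulLeft (δ : Derivation k A A) {b : B}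
    (hb : ∀ w, b * w = σ w * b) :
    IsSkewDerivation (Algebra.TensorProduct.map (AlgHom.id k A) σ)
      (TensorProduct.map δ.toLinearMap (LinearMap.mulLeft k b)) := fun x y => by
  induction x with
  | zero => simp
  | add x₁ x₂ h₁ h₂ => simp only [add_mul, map_add, h₁, h₂]; abel
  | tmul p v =>
    induction y with
    | zero => simp
    | add y₁ y₂ h₁ h₂ => simp only [mul_add, map_add, h₁, h₂]; abel
    | tmul q w =>
      have hδ : δ (p * q) = δ p * q + p * δ q := by
        rw [δ.leibniz, smul_eq_mul, smul_eq_mul, mul_comm q, add_comm]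
      have hbv : b * (v * w) = σ v * (b * w) := by rw [← mul_assoc, hb, mul_assoc]
      simp only [Algebra.TensorProduct.tmul_mul_tmul, TensorProduct.map_tmul,
        Algebra.TensorProduct.map_tmul, LinearMap.mulLeft_apply, AlgHom.id_apply,
        Derivation.coeFn_coe, hδ, TensorProduct.add_tmul,
        mul_assoc, hbv]

end SkewDerivation

section Clifford

variable {k M : Type*} [CommRing k] [AddCommGroup M] [Module k M]

theorem isSkewDerivation_contractLeft (Q : QuadraticForm k M) (f : Module.Dual k M) :
    IsSkewDerivation (CliffordAlgebra.involute (Q := Q)) (CliffordAlgebra.contractLeft f) :=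
  fun v w => by
  induction v using CliffordAlgebra.left_induction with
  | algebraMap r => simp [CliffordAlgebra.contractLeft_algebraMap_mul]
  | add v₁ v₂ h₁ h₂ => simp only [add_mul, map_add, h₁, h₂]; abel
  | ι_mul v m hv =>
    rw [mul_assoc, CliffordAlgebra.contractLeft_ι_mul, CliffordAlgebra.contractLeft_ι_mul, hv,
      map_mul, CliffordAlgebra.involute_ι, sub_mul, smul_mul_assoc]
    noncomm_ring

theorem ι_mul_eq_involute_mul_ι (m : M) (v : ExteriorAlgebra k M) :
    ExteriorAlgebra.ι k m * v = CliffordAlgebra.involute v * ExteriorAlgebra.ι k m := by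
  induction v using CliffordAlgebra.left_induction with
  | algebraMap r => rw [AlgHom.commutes, Algebra.commutes]
  | add v₁ v₂ h₁ h₂ => rw [mul_add, map_add, add_mul, h₁, h₂]
  | ι_mul v n hv =>
    have hswap : ExteriorAlgebra.ι k m * ExteriorAlgebra.ι k n
        = -(ExteriorAlgebra.ι k n * ExteriorAlgebra.ι k m) :=
      eq_neg_of_add_eq_zero_left (ExteriorAlgebra.ι_add_mul_swap m n)
    rw [map_mul, CliffordAlgebra.involute_ι, ← mul_assoc]
    rw [hswap, neg_mul, neg_mul, neg_mul, mul_assoc, hv, mul_assoc]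

end Clifford

/-- The parity involution of the small algebra: the identity on the even generators and minus the
identity on the odd ones. -/
def parity : SmallAlg →ₐ[ℚ] SmallAlg :=
  Algebra.TensorProduct.map (AlgHom.id ℚ _) CliffordAlgebra.involute

theorem parity_evGen (i : Fin 5) : parity (evGen i) = evGen i := by
  simp [parity, evGen]

theorem parity_odGen (i : Fin 5) : parity (odGen i) = -odGen i := by
  rw [parity, odGen, Algebra.TensorProduct.map_tmul, map_one, CliffordAlgebra.involute_ι,
    TensorProduct.tmul_neg]

theorem commute_evGen (i : Fin 5) (x : SmallAlg) : Commute (evGen i) x := by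
  induction x using TensorProduct.induction_on with
  | zero => exact Commute.zero_right _
  | add x y hx hy => exact hx.add_right hy
  | tmul p w =>
    simp only [Commute, SemiconjBy, evGen, Algebra.TensorProduct.tmul_mul_tmul, one_mul, mul_one,
      mul_comm p]

theorem isSkewDerivation_odToEv (i j : Fin 5) : IsSkewDerivation parity (odToEv i j) :=
  (isSkewDerivation_contractLeft 0 (coordφ i)).map_mulLeft _

theorem isSkewDerivation_evToOd (i j : Fin 5) : IsSkewDerivation parity (evToOd i j) :=
  isSkewDerivation_map_derivation_mulLeft _ (ι_mul_eq_involute_mul_ι _)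

theorem isSkewDerivation_dSmall : IsSkewDerivation parity dSmall :=
  ((((isSkewDerivation_odToEv 0 3).add (isSkewDerivation_odToEv 1 4)).add
    (isSkewDerivation_evToOd 0 2)).add (isSkewDerivation_evToOd 1 3)).add
    (isSkewDerivation_evToOd 2 4)

theorem isSkewDerivation_γSmall : IsSkewDerivation parity γSmall :=
  (((isSkewDerivation_odToEv 0 4).add (isSkewDerivation_evToOd 0 3)).add
    (isSkewDerivation_evToOd 1 4)).neg

theorem odToEv_odGen (i j a : Fin 5) : odToEv i j (odGen a) = if a = i then evGen j else 0 := by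
  rw [odToEv, odGen, TensorProduct.map_tmul]
  rw [CliffordAlgebra.contractLeft_ι]
  by_cases h : a = i <;> simp [h, coordφ, evGen]

theorem odToEv_evGen (i j a : Fin 5) : odToEv i j (evGen a) = 0 := by
  rw [odToEv, evGen, TensorProduct.map_tmul]
  rw [CliffordAlgebra.contractLeft_one, TensorProduct.tmul_zero]

theorem evToOd_evGen (i j a : Fin 5) : evToOd i j (evGen a) = if a = i then odGen j else 0 := by
  by_cases h : a = i <;>
    simp [h, evToOd, evGen, odGen, MvPolynomial.pderiv_X]

theorem evToOd_odGen (i j a : Fin 5) : evToOd i j (odGen a) = 0 := by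
  simp [evToOd, odGen]

theorem dSmall_odGen (i : Fin 5) : dSmall (odGen i) = ![Fcur, Ecur, 0, 0, 0] i := by
  fin_cases i <;> simp [dSmall, odToEv_odGen, evToOd_odGen, Fcur, Ecur]

theorem dSmall_evGen (i : Fin 5) : dSmall (evGen i) = ![Hcur, Kcur, Lcur, 0, 0] i := by
  fin_cases i <;> simp [dSmall, odToEv_evGen, evToOd_evGen, Hcur, Kcur, Lcur]

theorem γSmall_odGen (i : Fin 5) : γSmall (odGen i) = ![-Ecur, 0, 0, 0, 0] i := by
  fin_cases i <;> simp [γSmall, odToEv_odGen, evToOd_odGen, Ecur]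

theorem γSmall_evGen (i : Fin 5) : γSmall (evGen i) = ![-Kcur, -Lcur, 0, 0, 0] i := by
  fin_cases i <;> simp [γSmall, odToEv_evGen, evToOd_evGen, Kcur, Lcur]

theorem dSmall_odGen_mul (i : Fin 5) (x : SmallAlg) :
    dSmall (odGen i * x) = ![Fcur, Ecur, 0, 0, 0] i * x - odGen i * dSmall x := by
  rw [isSkewDerivation_dSmall.map_mul_of_odd (parity_odGen i), dSmall_odGen]

theorem γSmall_odGen_mul (i : Fin 5) (x : SmallAlg) :
    γSmall (odGen i * x) = ![-Ecur, 0, 0, 0, 0] i * x - odGen i * γSmall x := by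
  rw [isSkewDerivation_γSmall.map_mul_of_odd (parity_odGen i), γSmall_odGen]

theorem dSmall_evGen_mul (i : Fin 5) (x : SmallAlg) :
    dSmall (evGen i * x) = ![Hcur, Kcur, Lcur, 0, 0] i * x + evGen i * dSmall x := by
  rw [isSkewDerivation_dSmall.map_mul_of_even (parity_evGen i), dSmall_evGen]

theorem γSmall_evGen_mul (i : Fin 5) (x : SmallAlg) :
    γSmall (evGen i * x) = ![-Kcur, -Lcur, 0, 0, 0] i * x + evGen i * γSmall x := by
  rw [isSkewDerivation_γSmall.map_mul_of_even (parity_evGen i), γSmall_evGen]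

theorem dSmall_evGen_pow_mul (i : Fin 5) (n : ℕ) (x : SmallAlg) :
    dSmall (evGen i ^ n * x) =
      (n : ℚ) • (![Hcur, Kcur, Lcur, 0, 0] i * (evGen i ^ (n - 1) * x)) +
        evGen i ^ n * dSmall x := by
  rw [isSkewDerivation_dSmall.map_pow_mul_of_even (parity_evGen i) (commute_evGen i _),
    dSmall_evGen]

theorem γSmall_evGen_pow_mul (i : Fin 5) (n : ℕ) (x : SmallAlg) :
    γSmall (evGen i ^ n * x) =
      (n : ℚ) • (![-Kcur, -Lcur, 0, 0, 0] i * (evGen i ^ (n - 1) * x)) +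
        evGen i ^ n * γSmall x := by
  rw [isSkewDerivation_γSmall.map_pow_mul_of_even (parity_evGen i) (commute_evGen i _),
    γSmall_evGen]

/- The library lemmas of the same names do not rewrite here: in `SmallAlg`, `-x` and `r • x`
elaborate to operations of the tensor product of modules, which agree with those of the algebra
only after unfolding. -/
namespace SmallAlg

theorem neg_mul (x y : SmallAlg) : -x * y = -(x * y) := _root_.neg_mul x y

theorem mul_neg (x y : SmallAlg) : x * -y = -(x * y) := _root_.mul_neg x y

theorem mul_smul_comm (r : ℚ) (x y : SmallAlg) : x * r • y = r • (x * y) :=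
  _root_.mul_smul_comm r x y

end SmallAlg

/-- The element `a` of the descent, with `z` in place of `F ^ k H ^ m`: the part of form degree `0`
of `(A₁₀ + A₀₁) (B₂₀ + B₁₁ + B₀₂) ^ l z`, the degree of `z` not counted. -/
def descentZero (l : ℕ) (z : SmallAlg) : SmallAlg := A01 * (B02 ^ l * z)

/-- The element `b` of the descent, with `z` in place of `F ^ k H ^ m`: the part of form degree `1`
of `(A₁₀ + A₀₁) (B₂₀ + B₁₁ + B₀₂) ^ l z`, the degree of `z` not counted. -/
def descentOne (l : ℕ) (z : SmallAlg) : SmallAlg :=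
  A10 * (B02 ^ l * z) + (l : ℚ) • (A01 * (B11 * (B02 ^ (l - 1) * z)))

/-- The element `c` of the descent, with `z` in place of `F ^ k H ^ m`: the part of form degree `2`
of `(A₁₀ + A₀₁) (B₂₀ + B₁₁ + B₀₂) ^ l z`, the degree of `z` not counted. Where the subtraction in
an exponent truncates, the coefficient is zero. -/
def descentTwo (l : ℕ) (z : SmallAlg) : SmallAlg :=
  (l : ℚ) • (A10 * (B11 * (B02 ^ (l - 1) * z))) + (l : ℚ) • (A01 * (B20 * (B02 ^ (l - 1) * z))) +
    (l * (l - 1) / 2 : ℚ) • (A01 * (B11 ^ 2 * (B02 ^ (l - 2) * z)))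

section Descent

variable (l : ℕ) {z : SmallAlg}

theorem γSmall_descentZero (hγ : γSmall z = 0) : γSmall (descentZero l z) = 0 := by
  simp [descentZero, A01, B02, γSmall_odGen_mul, γSmall_evGen_pow_mul, hγ]

theorem dSmall_descentZero (hd : dSmall z = 0) :
    dSmall (descentZero l z) =
      Ecur * (B02 ^ l * z) - (l : ℚ) • (A01 * (Lcur * (B02 ^ (l - 1) * z))) := by
  simp [descentZero, A01, B02, dSmall_odGen_mul, dSmall_evGen_pow_mul, hd,
    SmallAlg.mul_smul_comm]

theorem γSmall_descentOne (hγ : γSmall z = 0) :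
    γSmall (descentOne l z) =
      -(Ecur * (B02 ^ l * z)) + (l : ℚ) • (A01 * (Lcur * (B02 ^ (l - 1) * z))) := by
  simp [descentOne, A01, A10, B02, B11, γSmall_odGen_mul, γSmall_evGen_mul,
    γSmall_evGen_pow_mul, hγ, SmallAlg.neg_mul, SmallAlg.mul_neg]

theorem dSmall_descentOne (hd : dSmall z = 0) :
    dSmall (descentOne l z) =
      Fcur * (B02 ^ l * z) - (l : ℚ) • (A10 * (Lcur * (B02 ^ (l - 1) * z))) +
        (l : ℚ) • (Ecur * (B11 * (B02 ^ (l - 1) * z)) - A01 * (Kcur * (B02 ^ (l - 1) * z))) -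
        (l * (l - 1) : ℚ) • (A01 * (Lcur * (B11 * (B02 ^ (l - 2) * z)))) := by
  have hcast : (l : ℚ) * ((l - 1 : ℕ) : ℚ) = l * (l - 1) := by cases l <;> simp
  have hcomm (x : SmallAlg) : evGen 1 * (Lcur * x) = Lcur * (evGen 1 * x) :=
    (commute_evGen 1 Lcur).left_comm x
  simp only [descentOne, A10, A01, B11, B02, map_add, map_smul, dSmall_odGen_mul,
    dSmall_evGen_mul, dSmall_evGen_pow_mul, Matrix.cons_val, hd, mul_zero, add_zero, mul_add,
    SmallAlg.mul_smul_comm, hcomm, Nat.sub_sub, Nat.reduceAdd, ← hcast, mul_smul]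
  module

theorem γSmall_descentTwo (hγ : γSmall z = 0) :
    γSmall (descentTwo l z) =
      (l : ℚ) • (A10 * (Lcur * (B02 ^ (l - 1) * z))) -
        (l : ℚ) • (Ecur * (B11 * (B02 ^ (l - 1) * z)) - A01 * (Kcur * (B02 ^ (l - 1) * z))) +
        (l * (l - 1) : ℚ) • (A01 * (Lcur * (B11 * (B02 ^ (l - 2) * z)))) := by
  simp only [descentTwo, A10, A01, B20, B11, B02, map_add, map_smul, γSmall_odGen_mul,
    γSmall_evGen_mul, γSmall_evGen_pow_mul, Matrix.cons_val, hγ, zero_mul, mul_zero, smul_zero,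
    add_zero, SmallAlg.neg_mul, SmallAlg.mul_neg, SmallAlg.mul_smul_comm, Nat.add_one_sub_one,
    pow_one]
  module

theorem statement18_general (hd : dSmall z = 0) (hγ : γSmall z = 0) :
    γSmall (descentZero l z) = 0 ∧
    dSmall (descentZero l z) + γSmall (descentOne l z) = 0 ∧
    dSmall (descentOne l z) + γSmall (descentTwo l z) = Fcur * (B02 ^ l * z) := by
  refine ⟨γSmall_descentZero l hγ, ?_, ?_⟩
  · rw [dSmall_descentZero l hd, γSmall_descentOne l hγ]
    abel
  · rw [dSmall_descentOne l hd, γSmall_descentTwo l hγ]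
    abel

end Descent

theorem dSmall_Fcur_pow_mul_Hcur_pow (k m : ℕ) : dSmall (Fcur ^ k * Hcur ^ m) = 0 :=
  isSkewDerivation_dSmall.map_mul_eq_zero
    (isSkewDerivation_dSmall.map_pow_eq_zero (dSmall_evGen 3) k)
    (isSkewDerivation_dSmall.map_pow_eq_zero (dSmall_odGen 2) m)

theorem γSmall_Fcur_pow_mul_Hcur_pow (k m : ℕ) : γSmall (Fcur ^ k * Hcur ^ m) = 0 :=
  isSkewDerivation_γSmall.map_mul_eq_zero
    (isSkewDerivation_γSmall.map_pow_eq_zero (γSmall_evGen 3) k)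
    (isSkewDerivation_γSmall.map_pow_eq_zero (γSmall_odGen 2) m)

set_option maxHeartbeats 2000000 in
/-- for all integers `l ≥ 1`, `k ≥ 0` and `m ∈ {0, 1}`, set
`a = A₀₁·B₀₂^l·F^k·H^m`,
`b = A₁₀·B₀₂^l·F^k·H^m + l·A₀₁·B₁₁·B₀₂^{l−1}·F^k·H^m`, and
`c = l·A₁₀·B₁₁·B₀₂^{l−1}·F^k·H^m + l·A₀₁·B₂₀·B₀₂^{l−1}·F^k·H^m
      + (l(l−1)/2)·A₀₁·B₁₁²·B₀₂^{l−2}·F^k·H^m`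
(the last term being omitted when `l = 1`, its coefficient being zero).  Then in `A`:
`γa = 0`, `da + γb = 0`, and `db + γc = F^{k+1}·B₀₂^l·H^m`: `a` is a γ-cocycle that can
be lifted exactly once, the obstruction to a second lift being `F^{k+1}B₀₂^lH^m`. -/
theorem statement18 (l k m : ℕ) (hl : 1 ≤ l) (hm : m = 0 ∨ m = 1) :
    γSmall (A01 * B02 ^ l * Fcur ^ k * Hcur ^ m) = 0 ∧
    dSmall (A01 * B02 ^ l * Fcur ^ k * Hcur ^ m) +
      γSmall (A10 * B02 ^ l * Fcur ^ k * Hcur ^ m +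
        (l : ℚ) • (A01 * B11 * B02 ^ (l - 1) * Fcur ^ k * Hcur ^ m)) = 0 ∧
    dSmall (A10 * B02 ^ l * Fcur ^ k * Hcur ^ m +
        (l : ℚ) • (A01 * B11 * B02 ^ (l - 1) * Fcur ^ k * Hcur ^ m)) +
      γSmall ((l : ℚ) • (A10 * B11 * B02 ^ (l - 1) * Fcur ^ k * Hcur ^ m) +
        (l : ℚ) • (A01 * B20 * B02 ^ (l - 1) * Fcur ^ k * Hcur ^ m) +
        ((l * (l - 1) / 2 : ℚ)) • (A01 * B11 ^ 2 * B02 ^ (l - 2) * Fcur ^ k * Hcur ^ m)) =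
      Fcur ^ (k + 1) * B02 ^ l * Hcur ^ m := by
  have hcomm : Commute (Fcur ^ k) (B02 ^ l) := (commute_evGen 3 _).pow_left k
  have hF : Fcur ^ (k + 1) * B02 ^ l * Hcur ^ m = Fcur * (B02 ^ l * (Fcur ^ k * Hcur ^ m)) := by
    rw [pow_succ', mul_assoc, mul_assoc, hcomm.left_comm]
  simpa only [descentZero, descentOne, descentTwo, hF, mul_assoc] using
    statement18_general l (dSmall_Fcur_pow_mul_Hcur_pow k m) (γSmall_Fcur_pow_mul_Hcur_pow k m)

end
end
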